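/- Let h be a positive integer and r = 2h. Let μ be a centered Gaussian probability measure on Matrix (Fin r) (Fin r) ℝ (i.e., the pushforward of μ under every continuous linear functional is a Gaussian measure on ℝ, and ∫ S dμ(S) = 0), with second moments K(α,i,β,j) := ∫ (S α i)·(S β j) dμ(S), and let M ∈ Matrix (Fin r) (Fin r) ℝ be a fixed deterministic matrix. Let Λ := ExteriorAlgebra ℝ (Fin r → ℝ), with e_α the image of the α-th standard basis vector and etop := e_0 * ⋯ * e_{r−1}, and equip Λ ⊗[ℝ] Λ with the tensor-product algebra structure in which (a ⊗ b)·(c ⊗ d) = (a·c) ⊗ (b·d). Define ω_M := Σ_{α,i} (M α i) • (e_α ⊗ e_i) and Ξ := Σ_{α < β, i < j} ( K(α,i,β,j) − K(α,j,β,i) ) • ((e_α * e_β) ⊗ (e_i * e_j)). Then ( ∫ det(M + S) dμ(S) ) • (etop ⊗ etop) = Σ_{j=0}^{h} (1 / ((r − 2j)! · j!)) • ( ω_M^{r−2j} · Ξ^{j} ), the product on the right being taken in Λ ⊗ Λ. -/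

import Mathlib

open MeasureTheory ProbabilityTheory
open scoped TensorProduct Matrix

attribute [local instance] Matrix.normedAddCommGroup Matrix.normedSpace

/-- Measurable space structure on real matrices, coming from the product structure on
`Fin n → Fin m → ℝ` (of which `Matrix (Fin n) (Fin m) ℝ` is a copy). -/
instance matrixMeasurableSpace (n m : ℕ) :
    MeasurableSpace (Matrix (Fin n) (Fin m) ℝ) :=
  inferInstanceAs (MeasurableSpace (Fin n → Fin m → ℝ))

/-!
Write `ω_T` for the double form `∑ T α i • (e α ⊗ e i)`. It is the sum over the rows of `T` of the
elements `e α ⊗ (∑ i, T α i • e i)`, which commute pairwise and have square zero, so its power of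
exponent `r` is `r!` times the product of these elements, that is `r! • det T • (etop ⊗ etop)`. For
`T = M + S` the expected determinant is therefore a moment of `ω_T`, a Gaussian linear combination
of the commuting elements `e α ⊗ e i`. The formula expressing the moments of a Gaussian linear
combination through its mean and variance is a polynomial identity in the elements being combined.
It holds for real numbers, where it gives the moments of a one-dimensional Gaussian law, and
therefore for commuting elements of any real algebra. Here the mean is `ω_M`, and the variance
`∑ K α i β j • (e α * e β) ⊗ (e i * e j)` is `2 • Ξ`, because the products `e α * e β` are
antisymmetric.
-/

namespace stochasticGBC

open scoped Nat

section SquareZero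

variable {R : Type*} [Semiring R]

theorem add_pow_succ_of_mul_self_eq_zero {a b : R} (h : Commute a b) (ha : a * a = 0) (n : ℕ) :
    (a + b) ^ (n + 1) = b ^ (n + 1) + (n + 1) • (a * b ^ n) := by
  induction n with
  | zero => simp [add_comm]
  | succ n ih =>
    have haba : a * b ^ n * a = 0 := by
      rw [mul_assoc, ← (h.pow_right n).eq, ← mul_assoc, ha, zero_mul]
    have hba : b ^ (n + 1) * a = a * b ^ (n + 1) := (h.pow_right (n + 1)).eq.symm
    rw [pow_succ, ih, mul_add, add_mul, add_mul, smul_mul_assoc, smul_mul_assoc, haba, hba,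
      smul_zero, mul_assoc, ← pow_succ, ← pow_succ, succ_nsmul _ (n + 1)]
    abel

theorem list_sum_pow_length_succ_eq_zero {l : List R} (hcomm : l.Pairwise Commute)
    (hsq : ∀ a ∈ l, a * a = 0) : l.sum ^ (l.length + 1) = 0 := by
  induction l with
  | nil => simp
  | cons a l ih =>
    obtain ⟨ha, hl⟩ := List.pairwise_cons.mp hcomm
    have hzero := ih hl fun b hb => hsq b (List.mem_cons_of_mem a hb)
    rw [List.sum_cons, List.length_cons, add_pow_succ_of_mul_self_eq_zero
      (Commute.list_sum_right _ _ ha) (hsq a List.mem_cons_self), pow_succ l.sum, hzero]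
    simp

theorem list_sum_pow_length {l : List R} (hcomm : l.Pairwise Commute)
    (hsq : ∀ a ∈ l, a * a = 0) : l.sum ^ l.length = l.length ! • l.prod := by
  induction l with
  | nil => simp
  | cons a l ih =>
    obtain ⟨ha, hl⟩ := List.pairwise_cons.mp hcomm
    have hsq' : ∀ b ∈ l, b * b = 0 := fun b hb => hsq b (List.mem_cons_of_mem a hb)
    rw [List.sum_cons, List.length_cons, List.prod_cons, add_pow_succ_of_mul_self_eq_zero
      (Commute.list_sum_right _ _ ha) (hsq a List.mem_cons_self),
      list_sum_pow_length_succ_eq_zero hl hsq', zero_add, ih hl hsq', mul_smul_comm, smul_smul,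
      Nat.factorial_succ]

end SquareZero

theorem alternatingMap_apply_eq_det_smul {R M N ι : Type*} [CommRing R] [AddCommGroup M]
    [Module R M] [AddCommGroup N] [Module R N] [Fintype ι] [DecidableEq ι]
    (e : Module.Basis ι R M) (f : M [⋀^ι]→ₗ[R] N) (v : ι → M) : f v = e.det v • f e := by
  suffices f = (LinearMap.toSpanSingleton R N (f e)).compAlternatingMap e.det from
    congrArg (· v) this
  refine Module.Basis.ext_alternating e fun i hi => ?_
  let σ : Equiv.Perm ι := Equiv.ofBijective i (Finite.injective_iff_bijective.1 hi)
  change f (e ∘ σ) = e.det (e ∘ σ) • f e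
  simp [AlternatingMap.map_perm, Module.Basis.det_self]

theorem list_prod_map_tmul {R A B ι : Type*} [CommSemiring R] [Semiring A]
    [Algebra R A] [Semiring B] [Algebra R B] (a : ι → A) (b : ι → B) (l : List ι) :
    (l.map fun k => a k ⊗ₜ[R] b k).prod = (l.map a).prod ⊗ₜ[R] (l.map b).prod := by
  induction l with
  | nil => rfl
  | cons k l ih => simp [ih]

section DoubleForms

variable {R : Type*} [CommRing R]

theorem ι_mul_ι_comm {M : Type*} [AddCommGroup M] [Module R M] (u v : M) :
    ExteriorAlgebra.ι R u * ExteriorAlgebra.ι R v =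
      -(ExteriorAlgebra.ι R v * ExteriorAlgebra.ι R u) :=
  eq_neg_of_add_eq_zero_left (ExteriorAlgebra.ι_add_mul_swap u v)

theorem commute_ι_tmul_ι {M N : Type*} [AddCommGroup M] [Module R M] [AddCommGroup N] [Module R N]
    (u u' : M) (v v' : N) :
    Commute (ExteriorAlgebra.ι R u ⊗ₜ[R] ExteriorAlgebra.ι R v)
      (ExteriorAlgebra.ι R u' ⊗ₜ[R] ExteriorAlgebra.ι R v') := by
  rw [commute_iff_eq, Algebra.TensorProduct.tmul_mul_tmul, Algebra.TensorProduct.tmul_mul_tmul,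
    ι_mul_ι_comm u, ι_mul_ι_comm v, TensorProduct.neg_tmul, TensorProduct.tmul_neg, neg_neg]

variable (R) in
/-- The degree-one generator `e i` of the exterior algebra of `R ^ n`, the image of the `i`-th
standard basis vector. -/
noncomputable def basisForm {n : ℕ} (i : Fin n) : ExteriorAlgebra R (Fin n → R) :=
  ExteriorAlgebra.ι R (Pi.single i 1)

variable (R) in
/-- The top form `e 0 * ⋯ * e (n - 1)` of the exterior algebra of `R ^ n`. Its tensor square is the
double form whose coefficient is the determinant. -/
noncomputable def volumeForm (n : ℕ) : ExteriorAlgebra R (Fin n → R) :=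
  ((List.finRange n).map (basisForm R)).prod

variable (R) in
/-- The double form `e α ⊗ e i` of bidegree `(1, 1)` attached to the matrix position `(α, i)`.
Positions are pairs, so that the entries of a random matrix form a single family of variables. -/
noncomputable def entryForm {m n : ℕ} (k : Fin m × Fin n) :
    ExteriorAlgebra R (Fin m → R) ⊗[R] ExteriorAlgebra R (Fin n → R) :=
  basisForm R k.1 ⊗ₜ basisForm R k.2

/-- The double form `ω_T` of bidegree `(1, 1)` whose coefficients are the entries of `T`. It encodes
the determinant of a square matrix in its top power. -/
noncomputable def matrixForm {m n : ℕ} (T : Matrix (Fin m) (Fin n) R) :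
    ExteriorAlgebra R (Fin m → R) ⊗[R] ExteriorAlgebra R (Fin n → R) :=
  ∑ α, ∑ i, T α i • (basisForm R α ⊗ₜ basisForm R i)

/-- The double form `Ξ` of bidegree `(2, 2)` attached to an array `K α i β j` of covariances. It
plays the role of the curvature in the Gauss–Bonnet–Chern formula. The coefficients are
antisymmetrized only in the column indices `i, j`; when `K` is symmetric, `K α i β j = K β j α i`,
this makes them antisymmetric in the row indices `α, β` as well. -/
noncomputable def curvatureForm {m n : ℕ} (K : Fin m → Fin n → Fin m → Fin n → R) :
    ExteriorAlgebra R (Fin m → R) ⊗[R] ExteriorAlgebra R (Fin n → R) :=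
  ∑ α, ∑ β, ∑ i, ∑ j,
    if α < β ∧ i < j then
      (K α i β j - K α j β i) •
        ((basisForm R α * basisForm R β) ⊗ₜ (basisForm R i * basisForm R j))
    else 0

theorem commute_entryForm {m n : ℕ} (k l : Fin m × Fin n) :
    Commute (entryForm R k) (entryForm R l) :=
  commute_ι_tmul_ι _ _ _ _

theorem matrixForm_eq_sum_entryForm {m n : ℕ} (T : Matrix (Fin m) (Fin n) R) :
    matrixForm T = ∑ k : Fin m × Fin n, T k.1 k.2 • entryForm R k := by
  rw [Fintype.sum_prod_type]
  rfl

theorem ι_eq_sum_basisForm {n : ℕ} (v : Fin n → R) :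
    ExteriorAlgebra.ι R v = ∑ i, v i • basisForm R i := by
  conv_lhs => rw [pi_eq_sum_univ' v]
  simp [basisForm, map_sum]

theorem ιMulti_eq_det_smul_volumeForm {n : ℕ} (v : Fin n → Fin n → R) :
    ExteriorAlgebra.ιMulti R n v = (Matrix.of v).det • volumeForm R n := by
  have hvol : ExteriorAlgebra.ιMulti R n (Pi.basisFun R (Fin n)) = volumeForm R n := by
    rw [ExteriorAlgebra.ιMulti_apply, List.ofFn_eq_map]
    simp only [Pi.basisFun_apply]
    rfl
  rw [alternatingMap_apply_eq_det_smul (Pi.basisFun R (Fin n)), hvol, Pi.basisFun_det_apply]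

theorem matrixForm_pow_eq_det_smul {n : ℕ} (T : Matrix (Fin n) (Fin n) R) :
    matrixForm T ^ n = n ! • T.det • (volumeForm R n ⊗ₜ[R] volumeForm R n) := by
  let y : Fin n → ExteriorAlgebra R (Fin n → R) ⊗[R] ExteriorAlgebra R (Fin n → R) :=
    fun α => basisForm R α ⊗ₜ ExteriorAlgebra.ι R (T.row α)
  have hsum : (List.ofFn y).sum = matrixForm T := by
    simp [y, matrixForm, List.sum_ofFn, ι_eq_sum_basisForm (T.row _), TensorProduct.tmul_sum]
  have hrows : ((List.finRange n).map fun α => ExteriorAlgebra.ι R (T.row α)).prod =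
      T.det • volumeForm R n := by
    rw [← List.ofFn_eq_map, ← ExteriorAlgebra.ιMulti_apply, ιMulti_eq_det_smul_volumeForm]
    rfl
  have hprod : (List.ofFn y).prod = T.det • (volumeForm R n ⊗ₜ[R] volumeForm R n) := by
    rw [List.ofFn_eq_map, list_prod_map_tmul, ← volumeForm, hrows, TensorProduct.tmul_smul]
  have hcomm : (List.ofFn y).Pairwise Commute :=
    List.pairwise_ofFn.mpr fun _ _ _ => commute_ι_tmul_ι _ _ _ _
  have hsq : ∀ a ∈ List.ofFn y, a * a = 0 := by
    simp [y, basisForm]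
  have hpow := list_sum_pow_length hcomm hsq
  rwa [hsum, hprod, List.length_ofFn] at hpow

theorem sum_sum_eq_sum_sum_ite_lt {ι V : Type*} [Fintype ι] [LinearOrder ι] [AddCommMonoid V]
    {F : ι → ι → V} (hF : ∀ a, F a a = 0) :
    ∑ a, ∑ b, F a b = ∑ a, ∑ b, if a < b then F a b + F b a else 0 := by
  have hsplit (a b : ι) : F a b = (if a < b then F a b else 0) + if b < a then F a b else 0 := by
    rcases lt_trichotomy a b with h | rfl | h
    · simp [h, h.not_gt]
    · simp [hF]
    · simp [h, h.not_gt]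
  calc ∑ a, ∑ b, F a b
      = (∑ a, ∑ b, if a < b then F a b else 0) + ∑ a, ∑ b, if b < a then F a b else 0 := by
        simp_rw [← Finset.sum_add_distrib, ← hsplit]
    _ = (∑ a, ∑ b, if a < b then F a b else 0) + ∑ a, ∑ b, if a < b then F b a else 0 := by
        congr 1
        exact Finset.sum_comm
    _ = ∑ a, ∑ b, if a < b then F a b + F b a else 0 := by
        simp_rw [← Finset.sum_add_distrib, ite_add_ite, add_zero]

theorem sum_sum_smul_eq_sum_sum_ite_lt_sub_smul {ι V : Type*} [Fintype ι] [LinearOrder ι]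
    [AddCommGroup V] [Module R V] (a : ι → ι → R) {y : ι → ι → V} (hy : ∀ i j, y j i = -y i j)
    (hy_self : ∀ i, y i i = 0) :
    ∑ i, ∑ j, a i j • y i j = ∑ i, ∑ j, if i < j then (a i j - a j i) • y i j else 0 := by
  rw [sum_sum_eq_sum_sum_ite_lt fun i => by rw [hy_self, smul_zero]]
  exact Finset.sum_congr rfl fun i _ => Finset.sum_congr rfl fun j _ => by
    rw [hy i j, smul_neg, ← sub_eq_add_neg, ← sub_smul]

theorem sum_smul_entryForm_mul_entryForm {m n : ℕ} {K : Fin m → Fin n → Fin m → Fin n → R}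
    (hK : ∀ α i β j, K α i β j = K β j α i) :
    ∑ k : Fin m × Fin n, ∑ l : Fin m × Fin n,
      K k.1 k.2 l.1 l.2 • (entryForm R k * entryForm R l) = (2 : ℕ) • curvatureForm K := by
  let y (α β : Fin m) (i j : Fin n) :
      ExteriorAlgebra R (Fin m → R) ⊗[R] ExteriorAlgebra R (Fin n → R) :=
    (basisForm R α * basisForm R β) ⊗ₜ (basisForm R i * basisForm R j)
  have hrow (α β i j) : y β α i j = -y α β i j := by
    simp only [y, basisForm, ι_mul_ι_comm (Pi.single β 1), TensorProduct.neg_tmul]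
  have hcol (α β i j) : y α β j i = -y α β i j := by
    simp only [y, basisForm, ι_mul_ι_comm (Pi.single j 1), TensorProduct.tmul_neg]
  have hrow_self (α i j) : y α α i j = 0 := by simp [y, basisForm]
  have hcol_self (α β i) : y α β i i = 0 := by simp [y, basisForm]
  let G (α β : Fin m) := ∑ i, ∑ j, K α i β j • y α β i j
  have hG_symm (α β) : G β α = G α β := by
    rw [show G β α = ∑ j, ∑ i, K β i α j • y β α i j from Finset.sum_comm]
    exact Finset.sum_congr rfl fun j _ => Finset.sum_congr rfl fun i _ => by
      rw [hK β i α j, hrow, ← hcol]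
  have hG (α β) : G α β = ∑ i, ∑ j, if i < j then (K α i β j - K α j β i) • y α β i j else 0 :=
    sum_sum_smul_eq_sum_sum_ite_lt_sub_smul _ (hcol α β) (hcol_self α β)
  calc ∑ k : Fin m × Fin n, ∑ l : Fin m × Fin n,
        K k.1 k.2 l.1 l.2 • (entryForm R k * entryForm R l)
      = ∑ α, ∑ β, G α β := by
        simp_rw [Fintype.sum_prod_type]
        refine Finset.sum_congr rfl fun α _ => Finset.sum_comm.trans ?_
        simp only [G, y, entryForm, Algebra.TensorProduct.tmul_mul_tmul]
    _ = ∑ α, ∑ β, if α < β then 2 • G α β else 0 := by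
        rw [sum_sum_eq_sum_sum_ite_lt fun α => by simp [G, hrow_self]]
        exact Finset.sum_congr rfl fun α _ => Finset.sum_congr rfl fun β _ => by
          rw [hG_symm α β, two_nsmul]
    _ = 2 • curvatureForm K := by
        simp_rw [curvatureForm, hG, Finset.smul_sum, ite_and]
        refine Finset.sum_congr rfl fun α _ => Finset.sum_congr rfl fun β _ => ?_
        split_ifs <;> simp [y]

end DoubleForms

section GaussianMoments

open scoped NNReal

/-- The polynomial `∑ j, a ^ (n - 2 * j) * c ^ j / ((n - 2 * j)! * j !)`, i.e. the coefficient of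
`t ^ n` in `exp (a * t + c * t ^ 2)`. For real `a` and `c` this is the `n`-th moment, divided by
`n !`, of the Gaussian law with mean `a` and variance `2 * c`. The subtraction `n - 2 * j` is never
truncated, as `j ≤ n / 2`. -/
noncomputable def gaussianDividedMoment {A : Type*} [Semiring A] [Module ℝ A] (n : ℕ) (a c : A) :
    A :=
  ∑ j ∈ Finset.range (n / 2 + 1), ((1 : ℝ) / ((n - 2 * j)! * j ! : ℕ)) • (a ^ (n - 2 * j) * c ^ j)

theorem map_gaussianDividedMoment {A B : Type*} [Semiring A] [Algebra ℝ A] [Semiring B]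
    [Algebra ℝ B] (F : A →ₐ[ℝ] B) (n : ℕ) (a c : A) :
    F (gaussianDividedMoment n a c) = gaussianDividedMoment n (F a) (F c) := by
  simp [gaussianDividedMoment]

theorem iteratedDeriv_succ_id_mul_zero {𝕜 : Type*} [NontriviallyNormedField 𝕜] {g : 𝕜 → 𝕜} {n : ℕ}
    (hg : ContDiffAt 𝕜 (n + 1) g 0) :
    iteratedDeriv (n + 1) (fun t => t * g t) 0 = (n + 1) * iteratedDeriv n g 0 := by
  rw [iteratedDeriv_fun_mul contDiffAt_fun_id hg,
    Finset.sum_eq_single_of_mem 1 (by simp)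
      fun i _ hi => by rw [iteratedDeriv_fun_id_zero, if_neg hi, mul_zero, zero_mul]]
  simp [iteratedDeriv_fun_id_zero]

theorem iteratedDeriv_mgf_id_gaussianReal_zero (a : ℝ) (v : ℝ≥0) (n : ℕ) :
    iteratedDeriv n (mgf id (gaussianReal a v)) 0 = ∫ x, x ^ n ∂gaussianReal a v :=
  iteratedDeriv_mgf_zero (by simp) n

theorem integral_pow_add_two_gaussianReal_zero (v : ℝ≥0) (n : ℕ) :
    ∫ x, x ^ (n + 2) ∂gaussianReal 0 v = (n + 1) * v * ∫ x, x ^ n ∂gaussianReal 0 v := by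
  set f := mgf id (gaussianReal 0 v) with hf
  have hf_eq : f = fun t => Real.exp (v * t ^ 2 / 2) := by simp [hf, mgf_id_gaussianReal]
  have hderiv : deriv f = fun t => t * (v * f t) := by
    ext t
    rw [hf_eq, (((hasDerivAt_pow 2 t).const_mul (v : ℝ)).div_const 2).exp.deriv]
    ring
  have hcont : ContDiff ℝ (n + 1) fun t => v * f t := by
    rw [hf_eq]
    fun_prop
  rw [← iteratedDeriv_mgf_id_gaussianReal_zero, ← iteratedDeriv_mgf_id_gaussianReal_zero, ← hf,
    iteratedDeriv_succ', hderiv, iteratedDeriv_succ_id_mul_zero hcont.contDiffAt,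
    iteratedDeriv_const_mul_field, mul_assoc]

theorem integral_pow_two_mul_gaussianReal_zero (v : ℝ≥0) (j : ℕ) :
    ∫ x, x ^ (2 * j) ∂gaussianReal 0 v = (2 * j)! / j ! * (v / 2) ^ j := by
  induction j with
  | zero => simp
  | succ j ih =>
    have hfact : ((2 * (j + 1))! : ℝ) = (2 * j + 2) * ((2 * j + 1) * (2 * j)!) := by
      rw [mul_add_one, Nat.factorial_succ, Nat.factorial_succ]
      push_cast
      ring
    rw [mul_add_one, integral_pow_add_two_gaussianReal_zero, ih, ← mul_add_one, hfact,
      Nat.factorial_succ, pow_succ]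
    push_cast
    field_simp

theorem integral_pow_of_odd_gaussianReal_zero (v : ℝ≥0) {n : ℕ} (hn : Odd n) :
    ∫ x, x ^ n ∂gaussianReal 0 v = 0 := by
  obtain ⟨j, rfl⟩ := hn
  induction j with
  | zero => simp
  | succ j ih =>
    rw [show 2 * (j + 1) + 1 = 2 * j + 1 + 2 by ring, integral_pow_add_two_gaussianReal_zero, ih,
      mul_zero]

theorem sum_range_succ_eq_sum_range_half_of_odd {M : Type*} [AddCommMonoid M] {f : ℕ → M}
    (hf : ∀ k, Odd k → f k = 0) (n : ℕ) :
    ∑ k ∈ Finset.range (n + 1), f k = ∑ j ∈ Finset.range (n / 2 + 1), f (2 * j) := by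
  symm
  refine Finset.sum_of_injOn (2 * ·) (fun _ _ _ _ => by simp) (fun j hj => ?maps_to)
    (fun k hk hk_image => hf k ?odd) fun _ _ => rfl
  case maps_to =>
    simp only [Finset.coe_range, Set.mem_Iio] at hj ⊢
    lia
  case odd =>
    rw [Finset.mem_range] at hk
    refine Nat.not_even_iff_odd.mp fun ⟨j, hj⟩ => hk_image ⟨j, ?_, by lia⟩
    exact Finset.mem_coe.mpr (Finset.mem_range.mpr (by lia))

theorem integral_pow_gaussianReal (a : ℝ) (v : ℝ≥0) (n : ℕ) :
    ∫ x, x ^ n ∂gaussianReal a v = n ! * gaussianDividedMoment n a (v / 2 : ℝ) := by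
  have hint (k : ℕ) : Integrable (fun x : ℝ => x ^ k) (gaussianReal 0 v) :=
    ((memLp_id_gaussianReal' (k : ENNReal) (by simp)).integrable_norm_pow').mono (by fun_prop)
      (by simp)
  calc ∫ x, x ^ n ∂gaussianReal a v
      = ∫ x, (x + a) ^ n ∂gaussianReal 0 v := by
        rw [← zero_add a, ← gaussianReal_map_add_const, zero_add,
          integral_map (by fun_prop) (by fun_prop)]
    _ = ∑ k ∈ Finset.range (n + 1),
          (∫ x, x ^ k ∂gaussianReal 0 v) * (a ^ (n - k) * n.choose k) := by
        simp_rw [add_pow, mul_assoc]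
        rw [integral_finsetSum _ fun k _ => (hint k).mul_const _]
        simp_rw [integral_mul_const]
    _ = ∑ j ∈ Finset.range (n / 2 + 1),
          (∫ x, x ^ (2 * j) ∂gaussianReal 0 v) * (a ^ (n - 2 * j) * n.choose (2 * j)) :=
        sum_range_succ_eq_sum_range_half_of_odd
          (fun k hk => by rw [integral_pow_of_odd_gaussianReal_zero v hk, zero_mul]) n
    _ = n ! * gaussianDividedMoment n a (v / 2 : ℝ) := by
        rw [gaussianDividedMoment, Finset.mul_sum]
        refine Finset.sum_congr rfl fun j hj => ?_
        have hj' : 2 * j ≤ n := by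
          rw [Finset.mem_range] at hj
          lia
        rw [integral_pow_two_mul_gaussianReal_zero, Nat.cast_choose ℝ hj', smul_eq_mul]
        push_cast
        field_simp

theorem integral_pow_of_hasGaussianLaw {Ω : Type*} [MeasurableSpace Ω] {P : Measure Ω} {Y : Ω → ℝ}
    (hY : HasGaussianLaw Y P) (n : ℕ) :
    ∫ ω, Y ω ^ n ∂P = n ! * gaussianDividedMoment n (∫ ω, Y ω ∂P) (Var[Y; P] / 2) := by
  rw [← integral_map (f := (· ^ n)) hY.aemeasurable (by fun_prop), hY.map_eq_gaussianReal,
    integral_pow_gaussianReal, Real.coe_toNNReal _ (variance_nonneg Y P)]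

end GaussianMoments

section AevalOfCommute

open scoped IsMulCommutative

variable {R σ A : Type*} [CommSemiring R] [Semiring A] [Algebra R A]

/-- Evaluation of multivariate polynomials at a family of pairwise commuting elements of a
possibly noncommutative algebra, computed in the commutative subalgebra generated by the family. -/
noncomputable def aevalOfCommute (x : σ → A) (hx : ∀ p q, Commute (x p) (x q)) :
    MvPolynomial σ R →ₐ[R] A :=
  haveI : IsMulCommutative (Algebra.adjoin R (Set.range x)) :=
    Algebra.isMulCommutative_adjoin R (by rintro _ ⟨p, rfl⟩ _ ⟨q, rfl⟩; exact hx p q)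
  (Algebra.adjoin R (Set.range x)).val.comp
    (MvPolynomial.aeval fun p => ⟨x p, Algebra.subset_adjoin (Set.mem_range_self p)⟩)

theorem aevalOfCommute_X (x : σ → A) (hx : ∀ p q, Commute (x p) (x q)) (p : σ) :
    aevalOfCommute (R := R) x hx (MvPolynomial.X p) = x p := by
  simp [aevalOfCommute]

end AevalOfCommute

section WickFormula

variable {Ω σ : Type*} [MeasurableSpace Ω] {P : Measure Ω} [Fintype σ] {Z : σ → Ω → ℝ}

theorem integrable_prod_of_hasGaussianLaw [IsFiniteMeasure P] {Y : σ → Ω → ℝ}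
    (hY : ∀ k, HasGaussianLaw (Y k) P) : Integrable (fun ω => ∏ k, Y k ω) P := by
  have hmem (k : σ) : MemLp (Y k) (Fintype.card σ) P := (hY k).memLp (by simp)
  refine (MemLp.prod' fun k (_ : k ∈ Finset.univ) => hmem k).integrable ?_
  simp [ENNReal.mul_inv_le_one]

theorem integral_apply_sum_smul_pow {B : Type*} [CommSemiring B] [Algebra ℝ B] (ℓ : B →ₗ[ℝ] ℝ)
    (x : σ → B) {n : ℕ}
    (hint : ∀ f : Fin n → σ, Integrable (fun ω => ∏ k, Z (f k) ω) P) :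
    ∫ ω, ℓ ((∑ p, Z p ω • x p) ^ n) ∂P =
      ℓ (∑ f : Fin n → σ, (∫ ω, ∏ k, Z (f k) ω ∂P) • ∏ k, x (f k)) := by
  simp_rw [Fintype.sum_pow, Finset.prod_smul, map_sum, map_smul, smul_eq_mul]
  rw [integral_finsetSum _ fun f _ => (hint f).mul_const _]
  simp_rw [integral_mul_const]

theorem variance_fun_sum_mul_const [IsFiniteMeasure P] (hZ : ∀ p, MemLp (Z p) 2 P) (t : σ → ℝ) :
    Var[fun ω => ∑ p, Z p ω * t p; P] = ∑ p, ∑ q, cov[Z p, Z q; P] * (t p * t q) := by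
  rw [variance_fun_sum fun p => (hZ p).mul_const (t p)]
  exact Finset.sum_congr rfl fun p _ => Finset.sum_congr rfl fun q _ => by
    rw [covariance_mul_const_left, covariance_mul_const_right]
    ring

theorem sum_integral_prod_smul_prod_X (hZ : HasGaussianLaw (fun ω => (Z · ω)) P) (n : ℕ) :
    ∑ f : Fin n → σ, (∫ ω, ∏ k, Z (f k) ω ∂P) • ∏ k, (MvPolynomial.X (f k) : MvPolynomial σ ℝ) =
      (n ! : ℝ) • gaussianDividedMoment n (∑ p, (∫ ω, Z p ω ∂P) • MvPolynomial.X p)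
        ((1 / 2 : ℝ) • ∑ p, ∑ q, cov[Z p, Z q; P] • (MvPolynomial.X p * MvPolynomial.X q)) := by
  have := hZ.isProbabilityMeasure
  refine MvPolynomial.funext fun t => ?_
  have hgauss : HasGaussianLaw (fun ω => ∑ p, Z p ω * t p) P := by
    have := hZ.map_fun (∑ p, t p • (.proj p : (σ → ℝ) →L[ℝ] ℝ))
    simpa [mul_comm] using this
  have hmean : ∫ ω, ∑ p, Z p ω * t p ∂P = ∑ p, (∫ ω, Z p ω ∂P) * t p := by
    rw [integral_finsetSum _ fun p _ => (hZ.eval p).integrable.mul_const _]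
    simp_rw [integral_mul_const]
  let ev := MvPolynomial.aeval (R := ℝ) t
  change ev _ = ev _
  rw [← AlgHom.toLinearMap_apply, ← integral_apply_sum_smul_pow _ _ fun f =>
    integrable_prod_of_hasGaussianLaw fun k => hZ.eval (f k)]
  simp only [AlgHom.toLinearMap_apply, map_pow, map_sum, map_smul, smul_eq_mul,
    map_gaussianDividedMoment, map_mul, ev, MvPolynomial.aeval_X]
  rw [integral_pow_of_hasGaussianLaw hgauss, hmean,
    variance_fun_sum_mul_const fun p => (hZ.eval p).memLp_two, div_eq_inv_mul, one_div]

theorem integral_apply_sum_smul_pow_of_hasGaussianLaw {A : Type*} [Semiring A] [Algebra ℝ A]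
    (hZ : HasGaussianLaw (fun ω => (Z · ω)) P)
    {x : σ → A} (hx : ∀ p q, Commute (x p) (x q)) (ℓ : A →ₗ[ℝ] ℝ) (n : ℕ) :
    ∫ ω, ℓ ((∑ p, Z p ω • x p) ^ n) ∂P =
      n ! * ℓ (gaussianDividedMoment n (∑ p, (∫ ω, Z p ω ∂P) • x p)
        ((1 / 2 : ℝ) • ∑ p, ∑ q, cov[Z p, Z q; P] • (x p * x q))) := by
  have := hZ.isProbabilityMeasure
  let ev := aevalOfCommute (R := ℝ) x hx
  have h := integral_apply_sum_smul_pow (ℓ ∘ₗ ev.toLinearMap) MvPolynomial.X fun f : Fin n → σ =>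
    integrable_prod_of_hasGaussianLaw fun k => hZ.eval (f k)
  rw [sum_integral_prod_smul_prod_X hZ] at h
  simpa [ev, map_gaussianDividedMoment, aevalOfCommute_X] using h

end WickFormula

section RandomMatrix

variable {Ω : Type*} [MeasurableSpace Ω] {P : Measure Ω} {m n : ℕ}

theorem integral_apply_matrixForm_pow {Z : Ω → Matrix (Fin m) (Fin n) ℝ}
    (hZ : HasGaussianLaw (fun ω (k : Fin m × Fin n) => Z ω k.1 k.2) P) (N : ℕ)
    (ℓ : ExteriorAlgebra ℝ (Fin m → ℝ) ⊗[ℝ] ExteriorAlgebra ℝ (Fin n → ℝ) →ₗ[ℝ] ℝ) :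
    ∫ ω, ℓ (matrixForm (Z ω) ^ N) ∂P =
      N ! * ℓ (gaussianDividedMoment N (matrixForm (.of fun α i => ∫ ω, Z ω α i ∂P))
        (curvatureForm fun α i β j => cov[fun ω => Z ω α i, fun ω => Z ω β j; P])) := by
  have hcurv := sum_smul_entryForm_mul_entryForm (R := ℝ)
    (K := fun α i β j => cov[fun ω => Z ω α i, fun ω => Z ω β j; P])
    fun _ _ _ _ => covariance_comm _ _
  have hwick := integral_apply_sum_smul_pow_of_hasGaussianLaw hZ
    (x := entryForm ℝ) commute_entryForm ℓ N
  simp_rw [matrixForm_eq_sum_entryForm]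
  rw [hwick, hcurv, ← Nat.cast_smul_eq_nsmul ℝ, smul_smul]
  norm_num

theorem integral_det_smul_volumeForm {Z : Ω → Matrix (Fin n) (Fin n) ℝ}
    (hZ : HasGaussianLaw (fun ω (k : Fin n × Fin n) => Z ω k.1 k.2) P) :
    (∫ ω, (Z ω).det ∂P) • (volumeForm ℝ n ⊗ₜ[ℝ] volumeForm ℝ n) =
      gaussianDividedMoment n (matrixForm (.of fun α i => ∫ ω, Z ω α i ∂P))
        (curvatureForm fun α i β j => cov[fun ω => Z ω α i, fun ω => Z ω β j; P]) := by
  refine Module.eval_apply_injective ℝ (LinearMap.ext fun ℓ => ?_)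
  have h := integral_apply_matrixForm_pow hZ n ℓ
  simp_rw [matrixForm_pow_eq_det_smul, map_nsmul, map_smul, nsmul_eq_mul, smul_eq_mul] at h
  rw [integral_const_mul, integral_mul_const] at h
  simpa using mul_left_cancel₀ (by positivity) h

instance : BorelSpace (Matrix (Fin m) (Fin n) ℝ) :=
  inferInstanceAs (BorelSpace (Fin m → Fin n → ℝ))

theorem integral_matrix_apply {Z : Ω → Matrix (Fin m) (Fin n) ℝ}
    (hZ : ∀ α i, Integrable (fun ω => Z ω α i) P) (α : Fin m) (i : Fin n) :
    (∫ ω, Z ω ∂P) α i = ∫ ω, Z ω α i ∂P :=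
  (congrFun (eval_integral (fun β => Integrable.of_eval (hZ β)) α) i).trans (eval_integral (hZ α) i)

theorem hasGaussianLaw_entries (μ : Measure (Matrix (Fin m) (Fin n) ℝ)) [IsGaussian μ] :
    HasGaussianLaw (fun (S : Matrix (Fin m) (Fin n) ℝ) (k : Fin m × Fin n) => S k.1 k.2) μ := by
  let L : Matrix (Fin m) (Fin n) ℝ →L[ℝ] (Fin m × Fin n → ℝ) :=
    .pi fun k => (Matrix.entryLinearMap ℝ ℝ k.1 k.2).toContinuousLinearMap
  exact IsGaussian.hasGaussianLaw_id.map_of_measurable L L.continuous.measurable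

theorem hasGaussianLaw_const_add {E : Type*} [NormedAddCommGroup E] [NormedSpace ℝ E]
    [MeasurableSpace E] [BorelSpace E] {X : Ω → E}
    (hX : HasGaussianLaw X P) (c : E) : HasGaussianLaw (fun ω => c + X ω) P where
  isGaussian_map := by
    have := hX.isGaussian_map
    rw [show (fun ω => c + X ω) = (c + ·) ∘ X from rfl,
      ← AEMeasurable.map_map_of_aemeasurable (by fun_prop) hX.aemeasurable]
    infer_instance

theorem expected_det_noncentered_general {r : ℕ} (μ : Measure (Matrix (Fin r) (Fin r) ℝ))
    [IsGaussian μ] (hcentered : (∫ S, S ∂μ) = 0) (M : Matrix (Fin r) (Fin r) ℝ) :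
    (∫ S, (M + S).det ∂μ) • (volumeForm ℝ r ⊗ₜ[ℝ] volumeForm ℝ r) =
      gaussianDividedMoment r (matrixForm M)
        (curvatureForm fun α i β j => ∫ S, S α i * S β j ∂μ) := by
  have hS := hasGaussianLaw_entries μ
  have hint (α i : Fin r) : Integrable (fun S : Matrix (Fin r) (Fin r) ℝ => S α i) μ :=
    (hS.eval (α, i)).integrable
  have hmean (α i : Fin r) : ∫ S, S α i ∂μ = 0 := by
    rw [← integral_matrix_apply hint, hcentered, Matrix.zero_apply]
  have hcov (α i β j : Fin r) :
      cov[fun S => (M + S) α i, fun S => (M + S) β j; μ] = ∫ S, S α i * S β j ∂μ := by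
    simp_rw [Matrix.add_apply]
    rw [covariance_const_add_left (hint α i), covariance_const_add_right (hint β j),
      covariance_eq_sub (hS.eval (α, i)).memLp_two (hS.eval (β, j)).memLp_two, hmean, zero_mul,
      sub_zero]
    rfl
  have hmeanM : (Matrix.of fun α i => ∫ S, (M + S) α i ∂μ) = M := by
    ext α i
    simp [integral_add, hint, hmean]
  rw [integral_det_smul_volumeForm (hasGaussianLaw_const_add hS fun k => M k.1 k.2), hmeanM]
  simp_rw [hcov]

end RandomMatrix

end stochasticGBC

/-- Expected determinant of a noncentered Gaussian random `r × r` matrix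
`M + S` (`r = 2h`, `S` centered Gaussian with second moments `K`): in the algebra of double
forms, with `ω_M = ∑_{α,i} M α i • (e α ⊗ e i)` and
`Ξ = ∑_{α<β, i<j} (K(α,i,β,j) − K(α,j,β,i)) • ((e α * e β) ⊗ (e i * e j))`, one has
`(E (det (M + S))) • (etop ⊗ etop) = ∑_{j=0}^{h} (1/((r−2j)!·j!)) • (ω_M^{r−2j} * Ξ^j)`. -/
theorem stochasticGBC.expected_det_noncentered
    (h : ℕ) (hh : 0 < h) (r : ℕ) (hr : r = 2 * h)
    (μ : Measure (Matrix (Fin r) (Fin r) ℝ)) [IsProbabilityMeasure μ]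
    (hgauss : ∀ L : Matrix (Fin r) (Fin r) ℝ →L[ℝ] ℝ,
      ∃ (a : ℝ) (v : NNReal), μ.map L = gaussianReal a v)
    (hcentered : (∫ S, S ∂μ) = 0)
    (M : Matrix (Fin r) (Fin r) ℝ) :
    let K : Fin r → Fin r → Fin r → Fin r → ℝ :=
      fun α i β j => ∫ S, S α i * S β j ∂μ
    let e : Fin r → ExteriorAlgebra ℝ (Fin r → ℝ) :=
      fun α => ExteriorAlgebra.ι ℝ (Pi.single α 1)
    let etop : ExteriorAlgebra ℝ (Fin r → ℝ) := ((List.finRange r).map e).prod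
    let ω : ExteriorAlgebra ℝ (Fin r → ℝ) ⊗[ℝ] ExteriorAlgebra ℝ (Fin r → ℝ) :=
      ∑ α : Fin r, ∑ i : Fin r, M α i • (e α ⊗ₜ[ℝ] e i)
    let Ξ : ExteriorAlgebra ℝ (Fin r → ℝ) ⊗[ℝ] ExteriorAlgebra ℝ (Fin r → ℝ) :=
      ∑ α : Fin r, ∑ β : Fin r, ∑ i : Fin r, ∑ j : Fin r,
        if α < β ∧ i < j then
          (K α i β j - K α j β i) • ((e α * e β) ⊗ₜ[ℝ] (e i * e j))
        else 0
    (∫ S, Matrix.det (M + S) ∂μ) • (etop ⊗ₜ[ℝ] etop) =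
      ∑ j ∈ Finset.range (h + 1),
        ((1 : ℝ) / ((r - 2 * j).factorial * j.factorial : ℕ)) •
          (ω ^ (r - 2 * j) * Ξ ^ j) := by
  have := isGaussian_of_map_eq_gaussianReal hgauss
  obtain rfl : h = r / 2 := by lia
  exact stochasticGBC.expected_det_noncentered_general μ hcentered M
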